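/- arXiv:2002.09877 — 7 statements merged into one kernel-verified Lean document; each statement's English description precedes it below -/
import Mathlib

section
/- Regular hyperlanguages are closed under complementation: for every NFH 𝓐 over Σ with k word variables, the NFH 𝓐̄ obtained by replacing the quantification condition α with its dual ᾱ (swapping every ∃ with ∀ and vice versa) and replacing the underlying NFA Â with an NFA accepting the complement of L(Â) over the alphabet (Σ ∪ {#})ᵏ satisfies: a nonempty hyperword S over Σ is in 𝓛(𝓐̄) if and only if S is not in 𝓛(𝓐). -/
/-- The length of the longest word in a `k`-tuple of words. -/
def maxLen {α : Type} {k : ℕ} (v : Fin k → List α) : ℕ :=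
  Finset.univ.sup fun i => (v i).length

/-- `zip` of a `k`-tuple of words over `α`: the word over `k`-tuples of
`Option α`, where `none` plays the role of the padding symbol `#`. Its length
is the length of the longest word, and its `j`-th letter has `i`-th component
the `j`-th letter of the `i`-th word (or `#` = `none` if that word has ended). -/
def zipWord {α : Type} {k : ℕ} (v : Fin k → List α) : List (Fin k → Option α) :=
  (List.range (maxLen v)).map fun j i => (v i)[j]?

/-- A nondeterministic finite hyperautomaton (NFH) with `k` word variables:
an NFA over the alphabet of `k`-tuples `(Σ ∪ {#})ᵏ` together with a
quantification condition, where the `i`-th quantifier binds the `i`-th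
variable (`true` = ∃, `false` = ∀). -/
structure NFH (α σ : Type) (k : ℕ) where
  quant : Fin k → Bool
  aut : NFA (Fin k → Option α) σ

/-- Satisfaction of the suffix `𝔔ᵢ₊₁xᵢ₊₁ ⋯ 𝔔ₖxₖ` of the quantification
condition by a hyperword `S`, given a partial assignment `v` to the first `i`
variables: when all variables are assigned, the underlying NFA must accept the
zip of the assignment. -/
def NFH.SatFrom {α σ : Type} {k : ℕ} (A : NFH α σ k) (S : Set (List α)) :
    ℕ → (Fin k → List α) → Prop
  | i, v =>
    if h : i < k then
      if A.quant ⟨i, h⟩ then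
        ∃ w ∈ S, A.SatFrom S (i + 1) (Function.update v ⟨i, h⟩ w)
      else
        ∀ w ∈ S, A.SatFrom S (i + 1) (Function.update v ⟨i, h⟩ w)
    else
      zipWord v ∈ A.aut.accepts
  termination_by i _ => k - i
  decreasing_by all_goals omega

/-- A hyperword `S` is accepted by the NFH `A` if it satisfies the full
quantification condition of `A`. -/
def NFH.Accepts {α σ : Type} {k : ℕ} (A : NFH α σ k) (S : Set (List α)) : Prop :=
  A.SatFrom S 0 fun _ => []

/-- The hyperlanguage of an NFH: the set of all nonempty hyperwords it accepts. -/
def NFH.hyperLang {α σ : Type} {k : ℕ} (A : NFH α σ k) : Set (Set (List α)) :=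
  { S | S.Nonempty ∧ A.Accepts S }

theorem NFH.satFrom_dual {α σ σ' : Type} {k : ℕ}
    (A : NFH α σ k) (B : NFH α σ' k)
    (hquant : ∀ i : Fin k, B.quant i = !A.quant i)
    (haut : ∀ w : List (Fin k → Option α), w ∈ B.aut.accepts ↔ w ∉ A.aut.accepts)
    (S : Set (List α)) (n : ℕ) : ∀ (i : ℕ) (v : Fin k → List α), k - i = n →
    (B.SatFrom S i v ↔ ¬ A.SatFrom S i v) := by
  induction n with
  | zero =>
    intro i v hi
    have h : ¬ i < k := by omega
    rw [NFH.SatFrom, NFH.SatFrom, dif_neg h, dif_neg h]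
    exact haut _
  | succ n ih =>
    intro i v hi
    have h : i < k := by omega
    rw [NFH.SatFrom, NFH.SatFrom, dif_pos h, dif_pos h, hquant]
    have hstep := fun w => ih (i + 1) (Function.update v ⟨i, h⟩ w) (by omega)
    cases A.quant ⟨i, h⟩ <;> simp [hstep]

/-- **Closure under complementation.** If `B` is obtained from the NFH `A` by
dualizing the quantification condition (swapping ∃ and ∀) and replacing the
underlying NFA by one accepting the complement of its language over
`(Σ ∪ {#})ᵏ`, then a nonempty hyperword is in `𝓛(B)` iff it is not in `𝓛(A)`. -/
theorem nfh_closure_complementation {α σ σ' : Type} {k : ℕ}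
    (A : NFH α σ k) (B : NFH α σ' k)
    (hquant : ∀ i : Fin k, B.quant i = !A.quant i)
    (haut : ∀ w : List (Fin k → Option α), w ∈ B.aut.accepts ↔ w ∉ A.aut.accepts)
    (S : Set (List α)) (hS : S.Nonempty) :
    S ∈ B.hyperLang ↔ S ∉ A.hyperLang := by
  have key := NFH.satFrom_dual A B hquant haut S k 0 (fun _ => []) (by omega)
  simp only [NFH.hyperLang, NFH.Accepts, Set.mem_ofPred_eq, hS, true_and]
  exact key
end

section
/- Regular hyperlanguages are closed under intersection: for every two NFH 𝓐₁ (with k variables) and 𝓐₂ (with k′ variables) over the same alphabet Σ, there exists an NFH 𝓐∩ over Σ with k + k′ variables, whose quantification condition is the concatenation α₁·α₂ of the conditions of 𝓐₁ and 𝓐₂ and whose number of states is polynomial in the numbers of states of 𝓐₁ and 𝓐₂, such that 𝓛(𝓐∩) = 𝓛(𝓐₁) ∩ 𝓛(𝓐₂). -/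
namespace NFHInter

/-- Automaton that simulates `M` on letters that are not entirely padding, and
which, after an accepted word, allows any number of padding letters. -/
def pad {α σ : Type} {k : ℕ} (M : NFA (Fin k → Option α) σ) :
    NFA (Fin k → Option α) (Option σ) where
  step s a := { t |
    ((∀ i, a i = none) ∧ t = none ∧ ∀ p, s = some p → p ∈ M.accept) ∨
    ((¬ ∀ i, a i = none) ∧ ∃ p q, s = some p ∧ t = some q ∧ q ∈ M.step p a) }
  start := Set.image some M.start
  accept := { t | ∀ p, t = some p → p ∈ M.accept }

/-- Product of two automata reading projections of the letters. -/
def prod {A B C σ τ : Type} (f : C → A) (g : C → B) (M : NFA A σ) (N : NFA B τ) :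
    NFA C (σ × τ) where
  step s a := M.step s.1 (f a) ×ˢ N.step s.2 (g a)
  start := M.start ×ˢ N.start
  accept := M.accept ×ˢ N.accept

theorem prod_evalFrom {A B C σ τ : Type} (f : C → A) (g : C → B) (M : NFA A σ) (N : NFA B τ)
    (w : List C) : ∀ (S : Set σ) (T : Set τ),
    (prod f g M N).evalFrom (S ×ˢ T) w = M.evalFrom S (w.map f) ×ˢ N.evalFrom T (w.map g) := by
  induction w with
  | nil => intro S T; simp
  | cons a w ih =>
    intro S T
    have h : (prod f g M N).stepSet (S ×ˢ T) a = M.stepSet S (f a) ×ˢ N.stepSet T (g a) := by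
      ext ⟨x, y⟩
      simp only [NFA.mem_stepSet, Set.mem_prod, prod, Prod.exists]
      constructor
      · rintro ⟨p, q, ⟨hp, hq⟩, h1, h2⟩
        exact ⟨⟨p, hp, h1⟩, ⟨q, hq, h2⟩⟩
      · rintro ⟨⟨p, hp, h1⟩, ⟨q, hq, h2⟩⟩
        exact ⟨p, q, ⟨hp, hq⟩, h1, h2⟩
    rw [NFA.evalFrom_cons, h, ih]
    simp [NFA.evalFrom_cons]

theorem prod_accepts {A B C σ τ : Type} (f : C → A) (g : C → B) (M : NFA A σ) (N : NFA B τ)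
    (w : List C) : w ∈ (prod f g M N).accepts ↔ w.map f ∈ M.accepts ∧ w.map g ∈ N.accepts := by
  have h := prod_evalFrom f g M N w M.start N.start
  simp only [NFA.mem_accepts]
  change (∃ S ∈ (M.accept ×ˢ N.accept : Set (σ × τ)),
    S ∈ (prod f g M N).evalFrom (M.start ×ˢ N.start) w) ↔ _
  rw [h]
  constructor
  · rintro ⟨⟨p, q⟩, ⟨hp, hq⟩, h1, h2⟩
    exact ⟨⟨p, hp, h1⟩, ⟨q, hq, h2⟩⟩
  · rintro ⟨⟨p, hp, h1⟩, ⟨q, hq, h2⟩⟩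
    exact ⟨(p, q), ⟨hp, hq⟩, h1, h2⟩

theorem pad_evalFrom {α σ : Type} {k : ℕ} (M : NFA (Fin k → Option α) σ)
    (w : List (Fin k → Option α)) : ∀ (S : Set σ), (∀ a ∈ w, ¬ ∀ i, a i = none) →
    (pad M).evalFrom (Set.image some S) w = Set.image some (M.evalFrom S w) := by
  induction w with
  | nil => intro S _; simp
  | cons a w ih =>
    intro S hw
    have ha := hw a (by simp)
    have h : (pad M).stepSet (Set.image some S) a = Set.image some (M.stepSet S a) := by
      ext x
      simp only [NFA.mem_stepSet, pad, Set.mem_image, Set.mem_setOf_eq]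
      constructor
      · rintro ⟨t, ⟨p, hp, rfl⟩, h | ⟨_, p', q, h1, rfl, h2⟩⟩
        · exact absurd h.1 ha
        · cases h1
          exact ⟨q, ⟨p, hp, h2⟩, rfl⟩
      · rintro ⟨q, ⟨p, hp, h2⟩, rfl⟩
        exact ⟨some p, ⟨p, hp, rfl⟩, Or.inr ⟨ha, p, q, rfl, rfl, h2⟩⟩
    rw [NFA.evalFrom_cons, h, ih _ (fun b hb => hw b (by simp [hb])), NFA.evalFrom_cons]

theorem pad_tail {α σ : Type} {k : ℕ} (M : NFA (Fin k → Option α) σ) (n : ℕ) :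
    ∀ T : Set (Option σ),
    (∃ t ∈ (pad M).accept, t ∈ (pad M).evalFrom T (List.replicate n (fun _ => none))) ↔
      ∃ t ∈ (pad M).accept, t ∈ T := by
  induction n with
  | zero => intro T; simp
  | succ n ih =>
    intro T
    rw [List.replicate_succ, NFA.evalFrom_cons, ih]
    simp only [NFA.mem_stepSet]
    constructor
    · rintro ⟨t, ht, s, hs, h | h⟩
      · exact ⟨s, h.2.2, hs⟩
      · exact absurd (fun _ => rfl) h.1
    · rintro ⟨s, hs, hsT⟩
      exact ⟨none, by simp [pad], s, hsT, Or.inl ⟨fun _ => rfl, rfl, hs⟩⟩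

theorem pad_accepts {α σ : Type} {k : ℕ} (M : NFA (Fin k → Option α) σ)
    (w : List (Fin k → Option α)) (hw : ∀ a ∈ w, ¬ ∀ i, a i = none) (n : ℕ) :
    w ++ List.replicate n (fun _ => none) ∈ (pad M).accepts ↔ w ∈ M.accepts := by
  have h1 := pad_tail M n ((pad M).evalFrom (pad M).start w)
  have h2 : (pad M).evalFrom (pad M).start w = Set.image some (M.evalFrom M.start w) :=
    pad_evalFrom M w M.start hw
  rw [NFA.mem_accepts, NFA.mem_accepts, NFA.evalFrom_append, h1, h2]
  constructor
  · rintro ⟨t, ht, p, hp, rfl⟩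
    exact ⟨p, ht p rfl, hp⟩
  · rintro ⟨p, hp, h⟩
    exact ⟨some p, by simpa [pad] using hp, p, h, rfl⟩

theorem zip_ne {α : Type} {k : ℕ} (v : Fin k → List α) :
    ∀ a ∈ zipWord v, ¬ ∀ i, a i = none := by
  intro a ha h
  simp only [zipWord, List.mem_map, List.mem_range] at ha
  obtain ⟨j, hj, rfl⟩ := ha
  simp only [List.getElem?_eq_none_iff] at h
  have : maxLen v ≤ j := Finset.sup_le (fun i _ => h i)
  omega

theorem zip_pad {α : Type} {k : ℕ} (v : Fin k → List α) (n : ℕ) (hn : maxLen v ≤ n) :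
    (List.range n).map (fun j i => (v i)[j]?) =
      zipWord v ++ List.replicate (n - maxLen v) (fun _ => none) := by
  obtain ⟨m, rfl⟩ := Nat.exists_eq_add_of_le hn
  rw [List.range_add, List.map_append, Nat.add_sub_cancel_left]
  congr 1
  rw [List.eq_replicate_iff]
  refine ⟨by simp, ?_⟩
  intro b hb
  simp only [List.map_map, List.mem_map, List.mem_range, Function.comp] at hb
  obtain ⟨j, _, rfl⟩ := hb
  funext i
  have : (v i).length ≤ maxLen v :=
    Finset.le_sup (f := fun i => (v i).length) (Finset.mem_univ i)
  simp only [List.getElem?_eq_none_iff]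
  omega

/-- The intersection hyperautomaton. -/
def inter {α σ₁ σ₂ : Type} {k k' : ℕ} (A₁ : NFH α σ₁ k) (A₂ : NFH α σ₂ k') :
    NFH α (Option σ₁ × Option σ₂) (k + k') where
  quant := Fin.append A₁.quant A₂.quant
  aut := prod (fun a i => a (Fin.castAdd k' i)) (fun a i => a (Fin.natAdd k i))
    (pad A₁.aut) (pad A₂.aut)

theorem inter_zip {α σ₁ σ₂ : Type} {k k' : ℕ} (A₁ : NFH α σ₁ k) (A₂ : NFH α σ₂ k')
    (u : Fin k → List α) (v : Fin k' → List α) :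
    zipWord (Fin.append u v) ∈ (inter A₁ A₂).aut.accepts ↔
      zipWord u ∈ A₁.aut.accepts ∧ zipWord v ∈ A₂.aut.accepts := by
  have hu : maxLen u ≤ maxLen (Fin.append u v) := Finset.sup_le fun i _ => by
    have := Finset.le_sup (f := fun i => (Fin.append u v i).length)
      (Finset.mem_univ (Fin.castAdd k' i))
    simpa [maxLen] using this
  have hv : maxLen v ≤ maxLen (Fin.append u v) := Finset.sup_le fun i _ => by
    have := Finset.le_sup (f := fun i => (Fin.append u v i).length)
      (Finset.mem_univ (Fin.natAdd k i))
    simpa [maxLen] using this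
  have h := prod_accepts (fun (a : Fin (k + k') → Option α) i => a (Fin.castAdd k' i))
    (fun a i => a (Fin.natAdd k i)) (pad A₁.aut) (pad A₂.aut) (zipWord (Fin.append u v))
  refine h.trans ?_
  have e1 : (zipWord (Fin.append u v)).map (fun a i => a (Fin.castAdd k' i)) =
      (List.range (maxLen (Fin.append u v))).map (fun j i => (u i)[j]?) := by
    simp [zipWord, Function.comp_def]
  have e2 : (zipWord (Fin.append u v)).map (fun a i => a (Fin.natAdd k i)) =
      (List.range (maxLen (Fin.append u v))).map (fun j i => (v i)[j]?) := by
    simp [zipWord, Function.comp_def]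
  rw [e1, e2, zip_pad u _ hu, zip_pad v _ hv, pad_accepts _ _ (zip_ne u),
    pad_accepts _ _ (zip_ne v)]

theorem update_left {β : Type} {k k' : ℕ} (u : Fin k → β) (v : Fin k' → β) (i : Fin k) (w : β) :
    Function.update (Fin.append u v) (Fin.castAdd k' i) w =
      Fin.append (Function.update u i w) v := by
  funext j
  refine Fin.addCases (fun j => ?_) (fun j => ?_) j
  · simp [Function.update_apply]
  · have : Fin.natAdd k j ≠ Fin.castAdd k' i := by
      intro h; have := congrArg Fin.val h; simp at this; omega
    simp [Function.update_apply, this]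

theorem update_right {β : Type} {k k' : ℕ} (u : Fin k → β) (v : Fin k' → β) (i : Fin k')
    (w : β) :
    Function.update (Fin.append u v) (Fin.natAdd k i) w =
      Fin.append u (Function.update v i w) := by
  funext j
  refine Fin.addCases (fun j => ?_) (fun j => ?_) j
  · have : Fin.castAdd k' j ≠ Fin.natAdd k i := by
      intro h; have := congrArg Fin.val h; simp at this; omega
    simp [Function.update_apply, this]
  · simp [Function.update_apply]

theorem sat_right {α σ₁ σ₂ : Type} {k k' : ℕ} (A₁ : NFH α σ₁ k) (A₂ : NFH α σ₂ k')
    (S : Set (List α)) (hS : S.Nonempty) (u : Fin k → List α) (n : ℕ) :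
    ∀ (i : ℕ) (v : Fin k' → List α), k' - i = n →
    ((inter A₁ A₂).SatFrom S (k + i) (Fin.append u v) ↔
      zipWord u ∈ A₁.aut.accepts ∧ A₂.SatFrom S i v) := by
  obtain ⟨w₀, hw₀⟩ := hS
  induction n with
  | zero =>
    intro i v hi
    rw [NFH.SatFrom, NFH.SatFrom, dif_neg (by omega), dif_neg (by omega), inter_zip]
  | succ n ih =>
    intro i v hi
    have hik : i < k' := by omega
    have hq : (inter A₁ A₂).quant ⟨k + i, by omega⟩ = A₂.quant ⟨i, hik⟩ :=
      Fin.append_right A₁.quant A₂.quant ⟨i, hik⟩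
    have key : ∀ w, (inter A₁ A₂).SatFrom S (k + i + 1)
        (Function.update (Fin.append u v) ⟨k + i, by omega⟩ w) ↔
        zipWord u ∈ A₁.aut.accepts ∧
          A₂.SatFrom S (i + 1) (Function.update v ⟨i, hik⟩ w) := by
      intro w
      rw [← ih (i + 1) _ (by omega), ← update_right]
      rfl
    rw [NFH.SatFrom, NFH.SatFrom, dif_pos (by omega), dif_pos hik, hq]
    simp only [key]
    split
    · constructor
      · rintro ⟨w, hw, h1, h2⟩
        exact ⟨h1, w, hw, h2⟩
      · rintro ⟨h1, w, hw, h2⟩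
        exact ⟨w, hw, h1, h2⟩
    · exact ⟨fun h => ⟨(h w₀ hw₀).1, fun w hw => (h w hw).2⟩, fun h w hw => ⟨h.1, h.2 w hw⟩⟩

theorem sat_left {α σ₁ σ₂ : Type} {k k' : ℕ} (A₁ : NFH α σ₁ k) (A₂ : NFH α σ₂ k')
    (S : Set (List α)) (hS : S.Nonempty) (v : Fin k' → List α) (n : ℕ) :
    ∀ (i : ℕ) (u : Fin k → List α), i + n = k →
    ((inter A₁ A₂).SatFrom S i (Fin.append u v) ↔
      A₁.SatFrom S i u ∧ A₂.SatFrom S 0 v) := by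
  have hS' := hS
  obtain ⟨w₀, hw₀⟩ := hS
  induction n with
  | zero =>
    intro i u hi
    obtain rfl : i = k := by omega
    rw [NFH.SatFrom.eq_1 A₁, dif_neg (by omega)]
    exact sat_right A₁ A₂ S hS' u _ 0 v rfl
  | succ n ih =>
    intro i u hi
    have hik : i < k := by omega
    have hq : (inter A₁ A₂).quant ⟨i, by omega⟩ = A₁.quant ⟨i, hik⟩ :=
      Fin.append_left A₁.quant A₂.quant ⟨i, hik⟩
    have key : ∀ w, (inter A₁ A₂).SatFrom S (i + 1)
        (Function.update (Fin.append u v) ⟨i, by omega⟩ w) ↔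
        A₁.SatFrom S (i + 1) (Function.update u ⟨i, hik⟩ w) ∧ A₂.SatFrom S 0 v := by
      intro w
      rw [← ih (i + 1) _ (by omega), ← update_left]
      rfl
    rw [NFH.SatFrom, NFH.SatFrom.eq_1 A₁, dif_pos (by omega), dif_pos hik, hq]
    simp only [key]
    split
    · constructor
      · rintro ⟨w, hw, h1, h2⟩
        exact ⟨⟨w, hw, h1⟩, h2⟩
      · rintro ⟨⟨w, hw, h1⟩, h2⟩
        exact ⟨w, hw, h1, h2⟩
    · exact ⟨fun h => ⟨fun w hw => (h w hw).1, (h w₀ hw₀).2⟩, fun h w hw => ⟨h.1 w hw, h.2⟩⟩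

end NFHInter

/-- **Closure under intersection.** For NFH `A₁` (with `k` variables) and `A₂`
(with `k'` variables) over the same alphabet, there is an NFH with `k + k'`
variables whose quantification condition is the concatenation of those of `A₁`
and `A₂`, whose number of states is polynomial (at most
`(|σ₁| + 1) * (|σ₂| + 1)`) in the numbers of states of `A₁` and `A₂`, and whose
hyperlanguage is `𝓛(A₁) ∩ 𝓛(A₂)`. -/
theorem nfh_closure_intersection {α σ₁ σ₂ : Type} [Fintype σ₁] [Fintype σ₂]
    {k k' : ℕ} (A₁ : NFH α σ₁ k) (A₂ : NFH α σ₂ k') :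
    ∃ (σ : Type) (inst : Fintype σ) (A : NFH α σ (k + k')),
      @Fintype.card σ inst ≤ (Fintype.card σ₁ + 1) * (Fintype.card σ₂ + 1) ∧
      A.quant = Fin.append A₁.quant A₂.quant ∧
      A.hyperLang = A₁.hyperLang ∩ A₂.hyperLang := by
  refine ⟨Option σ₁ × Option σ₂, inferInstance, NFHInter.inter A₁ A₂, ?_, rfl, ?_⟩
  · simp [Fintype.card_prod, Fintype.card_option]
  · ext S
    have e : (fun _ => [] : Fin (k + k') → List α) =
        Fin.append (fun _ => []) (fun _ => []) := by
      funext j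
      refine Fin.addCases (fun j => ?_) (fun j => ?_) j <;> simp
    simp only [NFH.hyperLang, Set.mem_inter_iff, Set.mem_setOf_eq, NFH.Accepts]
    rw [e]
    constructor
    · rintro ⟨hS, h⟩
      have := (NFHInter.sat_left A₁ A₂ S hS _ k 0 _ (by omega)).1 h
      exact ⟨⟨hS, this.1⟩, ⟨hS, this.2⟩⟩
    · rintro ⟨⟨hS, h1⟩, ⟨_, h2⟩⟩
      exact ⟨hS, (NFHInter.sat_left A₁ A₂ S hS _ k 0 _ (by omega)).2 ⟨h1, h2⟩⟩
end

section
/- Nonemptiness characterization for NFH_∃: an NFH_∃ 𝓐 with k variables has a nonempty hyperlanguage, 𝓛(𝓐) ≠ ∅, if and only if there exist words u₁,…,uₖ over Σ such that zip(u₁,…,uₖ) is accepted by the underlying NFA Â (equivalently, iff Â accepts some legal word). -/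
theorem satFrom_exists {α σ : Type} {k : ℕ} (A : NFH α σ k)
    (hq : ∀ i : Fin k, A.quant i = true) (S : Set (List α)) (n : ℕ) :
    ∀ (i : ℕ) (v : Fin k → List α), k - i = n → A.SatFrom S i v →
      ∃ u : Fin k → List α, zipWord u ∈ A.aut.accepts := by
  induction n with
  | zero =>
    intro i v hi h
    rw [NFH.SatFrom, dif_neg (by omega)] at h
    exact ⟨v, h⟩
  | succ n ih =>
    intro i v hi h
    rw [NFH.SatFrom, dif_pos (by omega), if_pos (hq _)] at h
    obtain ⟨w, _, h⟩ := h
    exact ih (i + 1) _ (by omega) h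

theorem satFrom_univ {α σ : Type} {k : ℕ} (A : NFH α σ k)
    (hq : ∀ i : Fin k, A.quant i = true) (u : Fin k → List α)
    (hu : zipWord u ∈ A.aut.accepts) (n : ℕ) :
    ∀ (i : ℕ) (v : Fin k → List α), k - i = n → (∀ j : Fin k, j.val < i → v j = u j) →
      A.SatFrom Set.univ i v := by
  induction n with
  | zero =>
    intro i v hi h
    rw [NFH.SatFrom, dif_neg (by omega)]
    have : v = u := funext fun j => h j (by have := j.isLt; omega)
    rwa [this]
  | succ n ih =>
    intro i v hi h
    have hik : i < k := by omega
    rw [NFH.SatFrom, dif_pos hik, if_pos (hq _)]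
    refine ⟨u ⟨i, hik⟩, Set.mem_univ _, ih (i + 1) _ (by omega) ?_⟩
    intro j hj
    by_cases hji : j = ⟨i, hik⟩
    · subst hji
      simp
    · rw [Function.update_of_ne hji]
      refine h j ?_
      have : j.val ≠ i := fun e => hji (Fin.ext e)
      omega

/-- **Nonemptiness characterization for NFH_∃.** An NFH all of whose
quantifiers are ∃ has a nonempty hyperlanguage iff its underlying NFA accepts
some legal word `zip(u₁, …, uₖ)`. -/
theorem nfhE_nonemptiness {α σ : Type} {k : ℕ} (A : NFH α σ k)
    (hq : ∀ i : Fin k, A.quant i = true) :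
    A.hyperLang.Nonempty ↔ ∃ v : Fin k → List α, zipWord v ∈ A.aut.accepts := by
  constructor
  · rintro ⟨S, _, h⟩
    exact satFrom_exists A hq S _ 0 _ rfl h
  · rintro ⟨u, hu⟩
    exact ⟨Set.univ, ⟨[], Set.mem_univ _⟩,
      satFrom_univ A hq u hu _ 0 _ rfl (fun j hj => absurd hj (Nat.not_lt_zero _))⟩
end

section
/- Nonemptiness characterization for NFH_∀: an NFH_∀ 𝓐 with k variables has a nonempty hyperlanguage, 𝓛(𝓐) ≠ ∅, if and only if 𝓐 accepts a hyperword of size 1; equivalently, if and only if there exists a word u over Σ such that zip(u,u,…,u) (the k-fold zip of u with itself) is accepted by the underlying NFA Â. -/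
/-- From a satisfied universal condition, instantiate every variable by the same word `u`. -/
theorem NFH.zip_of_satFrom {α σ : Type} {k : ℕ} (A : NFH α σ k)
    (hq : ∀ i : Fin k, A.quant i = false) (S : Set (List α)) (u : List α) (hu : u ∈ S)
    (n : ℕ) : ∀ (i : ℕ) (v : Fin k → List α), k - i = n →
      (∀ j : Fin k, j.val < i → v j = u) → A.SatFrom S i v →
      zipWord (fun _ : Fin k => u) ∈ A.aut.accepts := by
  induction n with
  | zero =>
    intro i v hn hv h
    have hik : ¬ i < k := by omega
    rw [NFH.SatFrom, dif_neg hik] at h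
    have hvu : v = fun _ => u := funext fun j => hv j (by omega)
    rwa [hvu] at h
  | succ n ih =>
    intro i v hn hv h
    have hik : i < k := by omega
    rw [NFH.SatFrom, dif_pos hik] at h
    simp only [hq, Bool.false_eq_true, if_false] at h
    refine ih (i + 1) _ (by omega) ?_ (h u hu)
    intro j hj
    by_cases hji : j = ⟨i, hik⟩
    · subst hji
      simp
    · rw [Function.update_of_ne hji]
      apply hv
      have : j.val ≠ i := fun e => hji (Fin.ext e)
      omega

/-- If the constant zip is accepted, then the singleton satisfies the universal condition. -/
theorem NFH.satFrom_of_zip {α σ : Type} {k : ℕ} (A : NFH α σ k)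
    (hq : ∀ i : Fin k, A.quant i = false) (u : List α)
    (h : zipWord (fun _ : Fin k => u) ∈ A.aut.accepts)
    (n : ℕ) : ∀ (i : ℕ) (v : Fin k → List α), k - i = n →
      (∀ j : Fin k, j.val < i → v j = u) → A.SatFrom {u} i v := by
  induction n with
  | zero =>
    intro i v hn hv
    have hik : ¬ i < k := by omega
    rw [NFH.SatFrom, dif_neg hik]
    have hvu : v = fun _ => u := funext fun j => hv j (by omega)
    rwa [hvu]
  | succ n ih =>
    intro i v hn hv
    have hik : i < k := by omega
    rw [NFH.SatFrom, dif_pos hik]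
    simp only [hq, Bool.false_eq_true, if_false]
    intro w hw
    refine ih (i + 1) _ (by omega) ?_
    intro j hj
    by_cases hji : j = ⟨i, hik⟩
    · subst hji
      simpa using hw
    · rw [Function.update_of_ne hji]
      apply hv
      have : j.val ≠ i := fun e => hji (Fin.ext e)
      omega

/-- **Nonemptiness characterization for NFH_∀.** An NFH all of whose
quantifiers are ∀ has a nonempty hyperlanguage iff it accepts a hyperword of
size 1, equivalently iff its underlying NFA accepts the `k`-fold zip
`zip(u, …, u)` of some word `u`. -/
theorem nfhA_nonemptiness {α σ : Type} {k : ℕ} (A : NFH α σ k)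
    (hq : ∀ i : Fin k, A.quant i = false) :
    (A.hyperLang.Nonempty ↔ ∃ u : List α, ({u} : Set (List α)) ∈ A.hyperLang) ∧
    (A.hyperLang.Nonempty ↔ ∃ u : List α, zipWord (fun _ => u) ∈ A.aut.accepts) := by
  have h1 : A.hyperLang.Nonempty → ∃ u : List α, zipWord (fun _ => u) ∈ A.aut.accepts := by
    rintro ⟨S, ⟨u, hu⟩, hS⟩
    exact ⟨u, A.zip_of_satFrom hq S u hu k 0 _ (by omega) (fun j hj => by omega) hS⟩
  have h2 : (∃ u : List α, zipWord (fun _ => u) ∈ A.aut.accepts) →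
      ∃ u : List α, ({u} : Set (List α)) ∈ A.hyperLang := by
    rintro ⟨u, hu⟩
    exact ⟨u, Set.singleton_nonempty u,
      A.satFrom_of_zip hq u hu k 0 _ (by omega) (fun j hj => by omega)⟩
  have h3 : (∃ u : List α, ({u} : Set (List α)) ∈ A.hyperLang) → A.hyperLang.Nonempty :=
    fun ⟨u, hu⟩ => ⟨{u}, hu⟩
  exact ⟨⟨fun h => h2 (h1 h), h3⟩, ⟨h1, fun h => h3 (h2 h)⟩⟩
end

section
/- Small-model property for NFH_∃∀: let 𝓐 be an NFH with quantification condition α = ∃x₁⋯∃xₘ∀xₘ₊₁⋯∀xₖ where 1 ≤ m < k. Then 𝓛(𝓐) ≠ ∅ if and only if 𝓐 accepts some hyperword S with |S| ≤ m. -/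
/-- Universal suffixes are inherited by subsets. -/
theorem NFH.satFrom_anti {α σ : Type} {k m : ℕ} (A : NFH α σ k)
    (hq : ∀ i : Fin k, A.quant i = decide ((i : ℕ) < m))
    {S T : Set (List α)} (hTS : T ⊆ S) :
    ∀ (n i : ℕ) (v : Fin k → List α), k - i = n → m ≤ i →
      A.SatFrom S i v → A.SatFrom T i v := by
  intro n
  induction n with
  | zero =>
    intro i v hn hi h
    have hk : ¬ i < k := by omega
    rw [NFH.SatFrom, dif_neg hk] at h ⊢
    exact h
  | succ n ih =>
    intro i v hn hi h
    have hk : i < k := by omega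
    have hf : ¬ (A.quant ⟨i, hk⟩ = true) := by
      rw [hq]; simpa using hi
    rw [NFH.SatFrom, dif_pos hk, if_neg hf] at h ⊢
    intro w hw
    exact ih (i + 1) _ (by omega) (by omega) (h w (hTS hw))

/-- From a model, extract the finitely many witnesses of the existential block. -/
theorem NFH.exists_witnesses {α σ : Type} {k m : ℕ} (A : NFH α σ k) (hmk : m < k)
    (hq : ∀ i : Fin k, A.quant i = decide ((i : ℕ) < m)) {S : Set (List α)} :
    ∀ (n i : ℕ) (v : Fin k → List α), i + n = m → A.SatFrom S i v →
      ∃ T : Set (List α), T ⊆ S ∧ T.Finite ∧ T.ncard ≤ n ∧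
        ∀ T' : Set (List α), T ⊆ T' → T' ⊆ S → A.SatFrom T' i v := by
  intro n
  induction n with
  | zero =>
    intro i v hn h
    exact ⟨∅, Set.empty_subset _, Set.finite_empty, by simp,
      fun T' _ hT' => A.satFrom_anti hq hT' _ i v rfl (by omega) h⟩
  | succ n ih =>
    intro i v hn h
    have hk : i < k := by omega
    have ht : A.quant ⟨i, hk⟩ = true := by
      rw [hq]; simp; omega
    rw [NFH.SatFrom, dif_pos hk, if_pos ht] at h
    obtain ⟨w, hw, h⟩ := h
    obtain ⟨T, hTS, hTf, hTc, hT⟩ := ih (i + 1) _ (by omega) h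
    refine ⟨insert w T, Set.insert_subset hw hTS, hTf.insert w,
      (Set.ncard_insert_le w T).trans (by omega), ?_⟩
    intro T' h1 h2
    rw [NFH.SatFrom, dif_pos hk, if_pos ht]
    exact ⟨w, h1 (Set.mem_insert _ _), hT T' ((Set.subset_insert _ _).trans h1) h2⟩

/-- **Small-model property for NFH_∃∀.** If the quantification condition of `A`
is `∃x₁⋯∃xₘ∀xₘ₊₁⋯∀xₖ` with `1 ≤ m < k`, then `𝓛(A) ≠ ∅` iff `A` accepts some
hyperword of size at most `m`. -/
theorem nfhEA_small_model {α σ : Type} {k m : ℕ} (A : NFH α σ k)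
    (hm : 1 ≤ m) (hmk : m < k)
    (hq : ∀ i : Fin k, A.quant i = decide ((i : ℕ) < m)) :
    A.hyperLang.Nonempty ↔ ∃ S ∈ A.hyperLang, S.Finite ∧ S.ncard ≤ m := by
  constructor
  · rintro ⟨S, _, hS⟩
    obtain ⟨T, hTS, hTf, hTc, hT⟩ := A.exists_witnesses hmk hq m 0 _ (by omega) hS
    have hacc := hT T subset_rfl hTS
    refine ⟨T, ⟨?_, hacc⟩, hTf, hTc⟩
    have hk : 0 < k := by omega
    have ht : A.quant ⟨0, hk⟩ = true := by
      rw [hq]; simp; omega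
    rw [NFH.SatFrom, dif_pos hk, if_pos ht] at hacc
    obtain ⟨w, hw, _⟩ := hacc
    exact ⟨w, hw⟩
  · rintro ⟨S, hS, _⟩
    exact ⟨S, hS⟩
end

section
/- Hyperlanguages of NFH_∃ are closed upward under inclusion of hyperwords: if 𝓐 is an NFH_∃, S ∈ 𝓛(𝓐), and S ⊆ S′ for a hyperword S′, then S′ ∈ 𝓛(𝓐). -/
theorem NFH.satFrom_mono {α σ : Type} {k : ℕ} (A : NFH α σ k)
    (hq : ∀ i : Fin k, A.quant i = true)
    (S S' : Set (List α)) (hsub : S ⊆ S') (n : ℕ) :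
    ∀ (i : ℕ) (v : Fin k → List α), k - i = n → A.SatFrom S i v → A.SatFrom S' i v := by
  induction n with
  | zero =>
    intro i v hi h
    have hk : ¬ i < k := by omega
    rw [NFH.SatFrom, dif_neg hk] at h ⊢
    exact h
  | succ n ih =>
    intro i v hi h
    have hk : i < k := by omega
    rw [NFH.SatFrom, dif_pos hk, if_pos (hq _)] at h ⊢
    obtain ⟨w, hw, h⟩ := h
    exact ⟨w, hsub hw, ih _ _ (by omega) h⟩

/-- **Upward closure for NFH_∃.** If `A` is an NFH all of whose quantifiers are
∃, `S ∈ 𝓛(A)`, and `S ⊆ S'`, then `S' ∈ 𝓛(A)`. -/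
theorem nfhE_upward_closed {α σ : Type} {k : ℕ} (A : NFH α σ k)
    (hq : ∀ i : Fin k, A.quant i = true)
    (S S' : Set (List α)) (hS : S ∈ A.hyperLang) (hsub : S ⊆ S') :
    S' ∈ A.hyperLang := by
  exact ⟨hS.1.mono hsub, A.satFrom_mono hq S S' hsub _ _ _ rfl hS.2⟩
end

section
/- Let 𝓐_∀ be an NFH_∀ over Σ with k variables, and let 𝓐′_∀ be a sequence-complete NFH_∀ over Σ with the same k variables such that for every legal word w over (Σ ∪ {#})ᵏ, the underlying NFA Â′_∀ accepts w if and only if Â_∀ accepts every sequence of w. Then 𝓛(𝓐_∀) = 𝓛(𝓐′_∀). -/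
/-- An NFH (with all quantifiers ∀) is sequence-complete if for every legal
word `zip(w₁, …, wₖ)`, its underlying NFA accepts it iff it accepts every
sequence `zip(w_{ζ(1)}, …, w_{ζ(k)})` of it. -/
def SeqComplete {α σ : Type} {k : ℕ} (A : NFH α σ k) : Prop :=
  ∀ v : Fin k → List α,
    zipWord v ∈ A.aut.accepts ↔
      ∀ ζ : Fin k → Fin k, zipWord (v ∘ ζ) ∈ A.aut.accepts

/-- An NFH (with all quantifiers ∃) is permutation-complete if for every legal
word `zip(w₁, …, wₖ)`, its underlying NFA accepts it iff it accepts every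
permutation `zip(w_{ζ(1)}, …, w_{ζ(k)})` of it. -/
def PermComplete {α σ : Type} {k : ℕ} (A : NFH α σ k) : Prop :=
  ∀ v : Fin k → List α,
    zipWord v ∈ A.aut.accepts ↔
      ∀ ζ : Equiv.Perm (Fin k), zipWord (v ∘ ζ) ∈ A.aut.accepts

/-- For an all-universal condition, satisfaction is acceptance of every completion. -/
theorem satFrom_forall_iff {α σ : Type} {k : ℕ} (A : NFH α σ k)
    (hA : ∀ i : Fin k, A.quant i = false) (S : Set (List α)) :
    ∀ (n i : ℕ) (v : Fin k → List α), k - i = n →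
      (A.SatFrom S i v ↔ ∀ u : Fin k → List α,
        (∀ j : Fin k, j.val < i → u j = v j) → (∀ j : Fin k, i ≤ j.val → u j ∈ S) →
          zipWord u ∈ A.aut.accepts) := by
  intro n
  induction n with
  | zero =>
    intro i v hi
    have hik : ¬ i < k := by omega
    rw [NFH.SatFrom, dif_neg hik]
    constructor
    · intro hz u hu _
      have : u = v := funext fun j => hu j (by have := j.isLt; omega)
      rwa [this]
    · intro hz
      exact hz v (fun _ _ => rfl) (fun j hj => by have := j.isLt; omega)
  | succ n ih =>
    intro i v hi
    have hik : i < k := by omega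
    rw [NFH.SatFrom, dif_pos hik, hA]
    simp only [Bool.false_eq_true, if_false]
    constructor
    · intro hz u hu huS
      refine (ih (i + 1) _ (by omega)).1 (hz (u ⟨i, hik⟩) (huS _ le_rfl)) u ?_ ?_
      · intro j hj
        by_cases hji : j = ⟨i, hik⟩
        · subst hji; simp
        · rw [Function.update_of_ne hji]
          refine hu j ?_
          have : j.val ≠ i := fun e => hji (Fin.ext e)
          omega
      · intro j hj
        exact huS j (by omega)
    · intro hz w hw
      refine (ih (i + 1) _ (by omega)).2 ?_
      intro u hu huS
      refine hz u ?_ ?_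
      · intro j hj
        rw [hu j (by omega), Function.update_of_ne]
        intro e
        subst e
        simp at hj
      · intro j hj
        by_cases hji : j = ⟨i, hik⟩
        · subst hji
          rw [hu _ (by simp)]
          simpa using hw
        · have : j.val ≠ i := fun e => hji (Fin.ext e)
          exact huS j (by omega)

theorem accepts_forall_iff {α σ : Type} {k : ℕ} (A : NFH α σ k)
    (hA : ∀ i : Fin k, A.quant i = false) (S : Set (List α)) :
    A.Accepts S ↔ ∀ u : Fin k → List α, (∀ j, u j ∈ S) → zipWord u ∈ A.aut.accepts := by
  rw [NFH.Accepts, satFrom_forall_iff A hA S _ 0 _ rfl]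
  simp

/-- If `A'` is a sequence-complete NFH_∀ such that, for every legal word `w`,
its underlying NFA accepts `w` iff the underlying NFA of the NFH_∀ `A` accepts
every sequence of `w`, then `𝓛(A) = 𝓛(A')`. -/
theorem nfhA_seq_complete_same_hyperlanguage {α σ σ' : Type} {k : ℕ}
    (A : NFH α σ k) (A' : NFH α σ' k)
    (hA : ∀ i : Fin k, A.quant i = false)
    (hA' : ∀ i : Fin k, A'.quant i = false)
    (hsc : SeqComplete A')
    (h : ∀ v : Fin k → List α,
      zipWord v ∈ A'.aut.accepts ↔
        ∀ ζ : Fin k → Fin k, zipWord (v ∘ ζ) ∈ A.aut.accepts) :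
    A.hyperLang = A'.hyperLang := by
  ext S
  simp only [NFH.hyperLang, Set.mem_setOf_eq, accepts_forall_iff A hA, accepts_forall_iff A' hA']
  refine and_congr_right fun _ => ⟨fun hS u hu => ?_, fun hS u hu => ?_⟩
  · exact (h u).2 fun ζ => hS _ fun j => hu (ζ j)
  · exact (h u).1 (hS u hu) id
end
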